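/- For every parameter p and every λ ∈ ℂ∖{0}, one has the identity of polynomials N_p(λx, λ²y) = λ^{2M+2N−1}·N_{λ·p}(x,y), where λ·p is the parameter with entries λ^{2k−3}·a_{k,i} and λ^{k−1}·b_{k,i}. -/

import Mathlib

open MvPolynomial

/-- The normal form `N_p` as a polynomial in `ℂ[x,y]`, where the parameter `p` is
given by the coefficient families `a k i` and `b k i`. -/
noncomputable def Npoly (M N : ℕ) (a b : ℕ → ℕ → ℂ) : MvPolynomial (Fin 2) ℂ :=
  X 0 * X 1 * (X 1 + X 0 ^ 2) *
    (∏ i ∈ Finset.Icc 1 (N - 1),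
      (X 1 + ∑ k ∈ Finset.Icc 1 i, C (a k i) * X 0 * X 1 ^ (k - 1))) *
    (∏ i ∈ Finset.Icc 1 (M - 2),
      (X 1 + ∑ k ∈ Finset.Icc 1 (N - 1 + 2 * i), C (b k i) * X 0 ^ (k + 1)))

/-!
Give `x` weight `1` and `y` weight `2`. Every branch in the two products is `y` plus further terms,
so `l ^ 2` can be pulled out of it, at the price of multiplying the coefficient of `x ^ d * y ^ e`
by `l ^ (d + 2 * e - 2)`; this is the action on the parameters. The factor `x * y * (y + x ^ 2)` is
homogeneous of weight `5` and there are `(N - 1) + (M - 2)` branches, so the total exponent is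
`5 + 2 * (N - 1) + 2 * (M - 2) = 2 * M + 2 * N - 1`.
-/

section WeightedScaling

variable {R : Type*} [CommSemiring R]

/-- The substitution `(x, y) ↦ (l ^ p * x, l ^ q * y)` on polynomials in two variables: scaling
by `l` when `x` has weight `p` and `y` has weight `q`. -/
noncomputable def weightedScaling (p q : ℕ) (l : R) :
    MvPolynomial (Fin 2) R →ₐ[R] MvPolynomial (Fin 2) R :=
  aeval ![C (l ^ p) * X 0, C (l ^ q) * X 1]

@[simp]
lemma weightedScaling_X_zero (p q : ℕ) (l : R) :
    weightedScaling p q l (X 0) = C (l ^ p) * X 0 := by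
  simp [weightedScaling]

@[simp]
lemma weightedScaling_X_one (p q : ℕ) (l : R) :
    weightedScaling p q l (X 1) = C (l ^ q) * X 1 := by
  simp [weightedScaling]

lemma weightedScaling_term (p q d e : ℕ) (l c : R) :
    weightedScaling p q l (C c * X 0 ^ d * X 1 ^ e) =
      C (l ^ (p * d + q * e) * c) * X 0 ^ d * X 1 ^ e := by
  simp only [map_mul, map_pow, algHom_C, algebraMap_eq, weightedScaling_X_zero,
    weightedScaling_X_one, pow_add, pow_mul]
  ring

lemma weightedScaling_X_one_add_sum {ι : Type*} (p q : ℕ) (l : Rˣ) (s : Finset ι) (c : ι → R)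
    (d e : ι → ℕ) (w : ι → ℤ) (hw : ∀ i ∈ s, (p * d i + q * e i : ℤ) = q + w i) :
    weightedScaling p q (l : R) (X 1 + ∑ i ∈ s, C (c i) * X 0 ^ d i * X 1 ^ e i) =
      C ((l : R) ^ q) *
        (X 1 + ∑ i ∈ s, C ((l ^ w i : Rˣ) * c i) * X 0 ^ d i * X 1 ^ e i) := by
  rw [map_add, map_sum, weightedScaling_X_one, mul_add, Finset.mul_sum]
  congr 1
  refine Finset.sum_congr rfl fun i hi ↦ ?_
  have pow_weight : (l : R) ^ (p * d i + q * e i) = (l : R) ^ q * (l ^ w i : Rˣ) := by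
    have : l ^ (p * d i + q * e i) = l ^ q * l ^ w i := by
      rw [← zpow_natCast, ← zpow_natCast, ← zpow_add, ← hw i hi]
      push_cast
      rfl
    exact_mod_cast congrArg Units.val this
  rw [weightedScaling_term, pow_weight, mul_assoc ((l : R) ^ q), C_mul]
  ring

end WeightedScaling

section NormalForm

variable {R : Type*} [CommSemiring R]

/-- The polynomial `y + a₁ x + a₂ x y + ⋯ + aₙ x y ^ (n - 1)`, a smooth branch transverse to both
coordinate axes when `a₁ ≠ 0`; these are the factors of the normal form carrying the parameters
`a`. -/
noncomputable def transverseBranch (a : ℕ → R) (n : ℕ) : MvPolynomial (Fin 2) R :=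
  X 1 + ∑ k ∈ Finset.Icc 1 n, C (a k) * X 0 * X 1 ^ (k - 1)

/-- The polynomial `y + b₁ x ^ 2 + ⋯ + bₙ x ^ (n + 1)`, a smooth branch tangent to the line `y = 0`
at the origin; these are the factors of the normal form carrying the parameters `b`. -/
noncomputable def tangentBranch (b : ℕ → R) (n : ℕ) : MvPolynomial (Fin 2) R :=
  X 1 + ∑ k ∈ Finset.Icc 1 n, C (b k) * X 0 ^ (k + 1)

/-- The normal form `N_p` over an arbitrary commutative semiring of coefficients. -/
noncomputable def normalForm (M N : ℕ) (a b : ℕ → ℕ → R) : MvPolynomial (Fin 2) R :=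
  X 0 * X 1 * (X 1 + X 0 ^ 2) *
    (∏ i ∈ Finset.Icc 1 (N - 1), transverseBranch (a · i) i) *
    (∏ i ∈ Finset.Icc 1 (M - 2), tangentBranch (b · i) (N - 1 + 2 * i))

lemma weightedScaling_transverseBranch (l : Rˣ) (a : ℕ → R) (n : ℕ) :
    weightedScaling 1 2 (l : R) (transverseBranch a n) =
      C ((l : R) ^ 2) *
        transverseBranch (fun k ↦ (l ^ (2 * (k : ℤ) - 3) : Rˣ) * a k) n := by
  simpa only [transverseBranch, pow_one] using
    weightedScaling_X_one_add_sum 1 2 l (Finset.Icc 1 n) a (fun _ ↦ 1) (· - 1)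
      (fun k ↦ 2 * (k : ℤ) - 3) fun k hk ↦ by
        have := (Finset.mem_Icc.mp hk).1
        omega

lemma weightedScaling_tangentBranch (l : Rˣ) (b : ℕ → R) (n : ℕ) :
    weightedScaling 1 2 (l : R) (tangentBranch b n) =
      C ((l : R) ^ 2) * tangentBranch (fun k ↦ (l ^ ((k : ℤ) - 1) : Rˣ) * b k) n := by
  simpa only [tangentBranch, pow_zero, mul_one] using
    weightedScaling_X_one_add_sum 1 2 l (Finset.Icc 1 n) b (· + 1) (fun _ ↦ 0)
      (fun k ↦ (k : ℤ) - 1) fun k _ ↦ by omega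

lemma weightedScaling_X_mul_X_mul_X_add_X_sq (l : R) :
    weightedScaling 1 2 l (X 0 * X 1 * (X 1 + X 0 ^ 2)) =
      C (l ^ 5) * (X 0 * X 1 * (X 1 + X 0 ^ 2)) := by
  simp only [map_mul, map_add, map_pow, weightedScaling_X_zero, weightedScaling_X_one]
  ring

theorem stmt_6_general (M N : ℕ) (hM : 2 ≤ M) (hN : 2 ≤ N) (a b : ℕ → ℕ → R) (l : Rˣ) :
    weightedScaling 1 2 (l : R) (normalForm M N a b) =
      C ((l : R) ^ (2 * M + 2 * N - 1)) *
        normalForm M N (fun k i ↦ (l ^ (2 * (k : ℤ) - 3) : Rˣ) * a k i)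
          (fun k i ↦ (l ^ ((k : ℤ) - 1) : Rˣ) * b k i) := by
  have total_weight : 2 * M + 2 * N - 1 = 5 + 2 * (N - 1) + 2 * (M - 2) := by omega
  rw [normalForm, map_mul, map_mul, map_prod, map_prod, weightedScaling_X_mul_X_mul_X_add_X_sq]
  simp only [weightedScaling_transverseBranch, weightedScaling_tangentBranch,
    Finset.prod_mul_distrib, Finset.prod_const, Nat.card_Icc, Nat.add_sub_cancel]
  rw [normalForm, total_weight, pow_add, pow_add, pow_mul, pow_mul]
  simp only [C_mul, C_pow]
  ring

lemma Npoly_eq_normalForm (M N : ℕ) (a b : ℕ → ℕ → ℂ) : Npoly M N a b = normalForm M N a b :=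
  rfl

end NormalForm

/-- `N_p(λx, λ²y) = λ^{2M+2N-1} · N_{λ·p}(x,y)`, where `λ·p` has entries
`λ^{2k-3}·a_{k,i}` and `λ^{k-1}·b_{k,i}`. -/
theorem stmt_6 (M N : ℕ) (hM : 2 ≤ M) (hN : 2 ≤ N) (a b : ℕ → ℕ → ℂ)
    (l : ℂ) (hl : l ≠ 0) :
    aeval ![(C l * X 0 : MvPolynomial (Fin 2) ℂ), C (l ^ 2) * X 1] (Npoly M N a b) =
      C (l ^ (2 * M + 2 * N - 1)) *
        Npoly M N (fun k i => l ^ (2 * (k : ℤ) - 3) * a k i)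
          (fun k i => l ^ ((k : ℤ) - 1) * b k i) := by
  simpa only [Npoly_eq_normalForm, weightedScaling, pow_one, Units.val_zpow_eq_zpow_val,
    Units.val_mk0] using
    stmt_6_general M N hM hN a b (Units.mk0 l hl)
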